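/- arXiv:math/9910142 — 2 statements merged into one kernel-verified Lean document; each statement's English description precedes it below -/
import Mathlib

section
/- Let α ∈ ℝ, let D ⊆ ℝ² be open, and let u : ℝ² → ℝ be C² on D and satisfy the Țițeica PDE with parameter α at every point of D. Then for every ε ∈ ℝ the function v(x,y) = e^{-ε} · u(x, e^{-ε} y) is C² and satisfies the Țițeica PDE with the same parameter α at every point (x,y) such that (x, e^{-ε} y) ∈ D. -/
/-- Partial derivative with respect to the first variable. -/
noncomputable def pdx (u : ℝ × ℝ → ℝ) (p : ℝ × ℝ) : ℝ :=
  deriv (fun x => u (x, p.2)) p.1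

/-- Partial derivative with respect to the second variable. -/
noncomputable def pdy (u : ℝ × ℝ → ℝ) (p : ℝ × ℝ) : ℝ :=
  deriv (fun y => u (p.1, y)) p.2

/-- The Țițeica PDE with parameter `α` holds for `u` at the point `p`:
`u_xx · u_yy − u_xy² = α · (x·u_x + y·u_y − u)⁴`. -/
def TiteicaPDE (α : ℝ) (u : ℝ × ℝ → ℝ) (p : ℝ × ℝ) : Prop :=
  pdx (pdx u) p * pdy (pdy u) p - (pdy (pdx u) p) ^ 2
    = α * (p.1 * pdx u p + p.2 * pdy u p - u p) ^ 4

theorem pdx_scale (k c : ℝ) (u : ℝ × ℝ → ℝ) :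
    pdx (fun q : ℝ × ℝ => k * u (q.1, c * q.2)) =
      fun q : ℝ × ℝ => k * pdx u (q.1, c * q.2) := by
  funext p
  simp only [pdx, deriv_const_mul_field]

theorem pdy_scale (k c : ℝ) (u : ℝ × ℝ → ℝ) :
    pdy (fun q : ℝ × ℝ => k * u (q.1, c * q.2)) =
      fun q : ℝ × ℝ => (k * c) * pdy u (q.1, c * q.2) := by
  funext p
  have h := deriv_comp_mul_left c (fun y => u (p.1, y)) p.2
  simp only [smul_eq_mul] at h
  simp only [pdy, deriv_const_mul_field]
  rw [h, mul_assoc]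

/-- The scaling group generated by `X₂ = y ∂/∂y − u ∂/∂u` is a symmetry group of the
Țițeica PDE: if `u` is a C² solution on the open set `D`, then for every `ε` the function
`v(x,y) = e^{-ε} · u(x, e^{-ε} y)` is C² and solves the PDE wherever `(x, e^{-ε} y) ∈ D`. -/
theorem titeica_symmetry_X2 (α ε : ℝ) (D : Set (ℝ × ℝ)) (hD : IsOpen D)
    (u : ℝ × ℝ → ℝ) (hu : ContDiffOn ℝ 2 u D)
    (hsol : ∀ p ∈ D, TiteicaPDE α u p) :
    ContDiffOn ℝ 2 (fun p : ℝ × ℝ => Real.exp (-ε) * u (p.1, Real.exp (-ε) * p.2))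
      {p : ℝ × ℝ | (p.1, Real.exp (-ε) * p.2) ∈ D} ∧
    ∀ p : ℝ × ℝ, (p.1, Real.exp (-ε) * p.2) ∈ D →
      TiteicaPDE α (fun q : ℝ × ℝ => Real.exp (-ε) * u (q.1, Real.exp (-ε) * q.2)) p := by
  constructor
  · have hg : ContDiff ℝ 2 (fun p : ℝ × ℝ => (p.1, Real.exp (-ε) * p.2)) := by fun_prop
    exact contDiffOn_const.mul (hu.comp hg.contDiffOn (fun p hp => hp))
  · intro p hp
    have h := hsol _ hp
    generalize Real.exp (-ε) = c at *
    unfold TiteicaPDE at *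
    simp only [pdx_scale, pdy_scale] at *
    linear_combination c ^ 4 * h
end

section
/- Let α ∈ ℝ, let D ⊆ ℝ² be open, and let u : ℝ² → ℝ be C⁴ on D with x·u_x + y·u_y − u ≠ 0 on D, satisfying the Țițeica PDE with parameter α at every point of D. Define w = x·u_x + y·u_y − u and the functions P¹(x,y) = −α·y·u + u_x·(u_xy·(y·u_y − u) − y·u_x·u_yy)/w⁴ and P²(x,y) = −u_x·(u_xx·(y·u_y − u) − y·u_x·u_xy)/w⁴ on D. Then ∂P¹/∂x + ∂P²/∂y = 0 at every point of D. -/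
lemma hasDerivAt_pdx {f : ℝ × ℝ → ℝ} {p : ℝ × ℝ} (h : DifferentiableAt ℝ f p) :
    HasDerivAt (fun x => f (x, p.2)) (fderiv ℝ f p (1, 0)) p.1 := by
  have h1 : HasDerivAt (fun x : ℝ => (x, p.2)) ((1 : ℝ), (0 : ℝ)) p.1 :=
    (hasDerivAt_id p.1).prodMk (hasDerivAt_const p.1 p.2)
  exact HasFDerivAt.comp_hasDerivAt (f := fun x : ℝ => (x, p.2)) p.1 h.hasFDerivAt h1

lemma hasDerivAt_pdy {f : ℝ × ℝ → ℝ} {p : ℝ × ℝ} (h : DifferentiableAt ℝ f p) :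
    HasDerivAt (fun y => f (p.1, y)) (fderiv ℝ f p (0, 1)) p.2 := by
  have h1 : HasDerivAt (fun y : ℝ => (p.1, y)) ((0 : ℝ), (1 : ℝ)) p.2 :=
    (hasDerivAt_const p.2 p.1).prodMk (hasDerivAt_id p.2)
  exact HasFDerivAt.comp_hasDerivAt (f := fun y : ℝ => (p.1, y)) p.2 h.hasFDerivAt h1

lemma pdx_eq {f : ℝ × ℝ → ℝ} {p : ℝ × ℝ} (h : DifferentiableAt ℝ f p) :
    pdx f p = fderiv ℝ f p (1, 0) := (hasDerivAt_pdx h).deriv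

lemma pdy_eq {f : ℝ × ℝ → ℝ} {p : ℝ × ℝ} (h : DifferentiableAt ℝ f p) :
    pdy f p = fderiv ℝ f p (0, 1) := (hasDerivAt_pdy h).deriv

lemma diffAt_of {f : ℝ × ℝ → ℝ} {D : Set (ℝ × ℝ)} (hD : IsOpen D) {n : WithTop ℕ∞}
    (hn : n ≠ 0) (h : ContDiffOn ℝ n f D) {p : ℝ × ℝ} (hp : p ∈ D) : DifferentiableAt ℝ f p :=
  (h.contDiffAt (hD.mem_nhds hp)).differentiableAt hn

lemma contDiffOn_pdx {f : ℝ × ℝ → ℝ} {D : Set (ℝ × ℝ)} (hD : IsOpen D) {m n : WithTop ℕ∞}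
    (hmn : m + 1 ≤ n) (h : ContDiffOn ℝ n f D) : ContDiffOn ℝ m (pdx f) D := by
  have hn : n ≠ 0 := by rintro rfl; simp at hmn
  exact ((h.fderiv_of_isOpen hD hmn).clm_apply contDiffOn_const).congr
    fun p hp => pdx_eq (diffAt_of hD hn h hp)

lemma contDiffOn_pdy {f : ℝ × ℝ → ℝ} {D : Set (ℝ × ℝ)} (hD : IsOpen D) {m n : WithTop ℕ∞}
    (hmn : m + 1 ≤ n) (h : ContDiffOn ℝ n f D) : ContDiffOn ℝ m (pdy f) D := by
  have hn : n ≠ 0 := by rintro rfl; simp at hmn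
  exact ((h.fderiv_of_isOpen hD hmn).clm_apply contDiffOn_const).congr
    fun p hp => pdy_eq (diffAt_of hD hn h hp)

open Filter Topology in
lemma pd_comm {f : ℝ × ℝ → ℝ} {D : Set (ℝ × ℝ)} (hD : IsOpen D)
    (h : ContDiffOn ℝ 2 f D) {p : ℝ × ℝ} (hp : p ∈ D) : pdx (pdy f) p = pdy (pdx f) p := by
  have hx := contDiffOn_pdx hD (m := 1) (by norm_num) h
  have hy := contDiffOn_pdy hD (m := 1) (by norm_num) h
  rw [pdx_eq (diffAt_of hD (by simp) hy hp), pdy_eq (diffAt_of hD (by simp) hx hp)]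
  have ex : pdx f =ᶠ[𝓝 p] fun q => fderiv ℝ f q (1, 0) := by
    filter_upwards [hD.mem_nhds hp] with q hq using pdx_eq (diffAt_of hD (by simp) h hq)
  have ey : pdy f =ᶠ[𝓝 p] fun q => fderiv ℝ f q (0, 1) := by
    filter_upwards [hD.mem_nhds hp] with q hq using pdy_eq (diffAt_of hD (by simp) h hq)
  rw [ex.fderiv_eq, ey.fderiv_eq]
  have hd : DifferentiableAt ℝ (fderiv ℝ f) p :=
    ((h.fderiv_of_isOpen hD (m := 1) (by norm_num)).contDiffAt
      (hD.mem_nhds hp)).differentiableAt (by simp)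
  have hs : IsSymmSndFDerivAt ℝ f p :=
    (h.contDiffAt (hD.mem_nhds hp)).isSymmSndFDerivAt (by simp)
  have key (v : ℝ × ℝ) : fderiv ℝ (fun q => fderiv ℝ f q v) p
      = (fderiv ℝ (fderiv ℝ f) p).flip v := by
    rw [fderiv_clm_apply hd (differentiableAt_const v)]; simp
  rw [key, key]
  exact hs.eq (1, 0) (0, 1)

/-- Proposition 2 of the paper: for a C⁴ solution `u` of the Țițeica PDE with
`w = x·u_x + y·u_y − u ≠ 0`, the pair
`P¹ = −α·y·u + u_x·(u_xy·(y·u_y − u) − y·u_x·u_yy)/w⁴` and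
`P² = −u_x·(u_xx·(y·u_y − u) − y·u_x·u_xy)/w⁴`
satisfies the conservation law `∂P¹/∂x + ∂P²/∂y = 0` on `D`. -/
theorem titeica_conservation_law (α : ℝ) (D : Set (ℝ × ℝ)) (hD : IsOpen D)
    (u : ℝ × ℝ → ℝ) (hu : ContDiffOn ℝ 4 u D)
    (hw : ∀ p ∈ D, p.1 * pdx u p + p.2 * pdy u p - u p ≠ 0)
    (hsol : ∀ p ∈ D, TiteicaPDE α u p) :
    ∀ p ∈ D,
      pdx (fun q : ℝ × ℝ =>
        -α * q.2 * u q +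
          pdx u q * (pdy (pdx u) q * (q.2 * pdy u q - u q) - q.2 * pdx u q * pdy (pdy u) q)
            / (q.1 * pdx u q + q.2 * pdy u q - u q) ^ 4) p
      + pdy (fun q : ℝ × ℝ =>
          -(pdx u q * (pdx (pdx u) q * (q.2 * pdy u q - u q) - q.2 * pdx u q * pdy (pdx u) q))
            / (q.1 * pdx u q + q.2 * pdy u q - u q) ^ 4) p
      = 0 := by

  intro p hp
  have hux := contDiffOn_pdx hD (m := 3) (by norm_num) hu
  have huy := contDiffOn_pdy hD (m := 3) (by norm_num) hu
  have hxx := contDiffOn_pdx hD (m := 2) (by norm_num) hux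
  have hxy := contDiffOn_pdy hD (m := 2) (by norm_num) hux
  have hyy := contDiffOn_pdy hD (m := 2) (by norm_num) huy
  have X {f : ℝ × ℝ → ℝ} (h : ContDiffOn ℝ 2 f D) :
      HasDerivAt (fun x => f (x, p.2)) (pdx f p) p.1 := by
    have := diffAt_of hD (by simp) h hp
    rw [pdx_eq this]; exact hasDerivAt_pdx this
  have Y {f : ℝ × ℝ → ℝ} (h : ContDiffOn ℝ 2 f D) :
      HasDerivAt (fun y => f (p.1, y)) (pdy f p) p.2 := by
    have := diffAt_of hD (by simp) h hp
    rw [pdy_eq this]; exact hasDerivAt_pdy this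
  have hu2 : ContDiffOn ℝ 2 u D := hu.of_le (by norm_num)
  have hux2 : ContDiffOn ℝ 2 (pdx u) D := hux.of_le (by norm_num)
  have huy2 : ContDiffOn ℝ 2 (pdy u) D := huy.of_le (by norm_num)
  have c1 : pdx (pdy u) p = pdy (pdx u) p := pd_comm hD hu2 hp
  have c2 : pdx (pdy (pdx u)) p = pdy (pdx (pdx u)) p := pd_comm hD hux2 hp
  have c3 : pdx (pdy (pdy u)) p = pdy (pdy (pdx u)) p := by
    rw [pd_comm hD huy2 hp]
    apply Filter.EventuallyEq.deriv_eq
    have hc : ContinuousAt (fun y : ℝ => (p.1, y)) p.2 := by fun_prop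
    filter_upwards [hc.preimage_mem_nhds (hD.mem_nhds hp)] with y hy
    exact pd_comm hD hu2 hy
  have hW := hw p hp
  have hS := hsol p hp
  unfold TiteicaPDE at hS
  have ix : HasDerivAt (fun x : ℝ => x) 1 p.1 := hasDerivAt_id p.1
  have iy : HasDerivAt (fun x : ℝ => x) 1 p.2 := hasDerivAt_id p.2
  have E1 := ((X hu2).const_mul (-α * p.2)).add
    (((X hux2).mul (((X hxy).mul (((X huy2).const_mul p.2).sub (X hu2))).sub
      (((X hux2).const_mul p.2).mul (X hyy)))).div
      ((((ix.mul (X hux2)).add ((X huy2).const_mul p.2)).sub (X hu2)).pow 4) (pow_ne_zero 4 hW))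
  have E2 := ((Y hux2).mul (((Y hxx).mul ((iy.mul (Y huy2)).sub (Y hu2))).sub
      ((iy.mul (Y hux2)).mul (Y hxy)))).neg.div
      (((((Y hux2).const_mul p.1).add (iy.mul (Y huy2))).sub (Y hu2)).pow 4) (pow_ne_zero 4 hW)
  refine (congrArg₂ (· + ·) E1.deriv E2.deriv).trans ?_
  simp only [Pi.mul_apply, Pi.sub_apply, Pi.add_apply, Pi.neg_apply, Pi.pow_apply, Prod.mk.eta,
    c1, c2, c3]
  clear E1 E2 X Y c1 c2 c3
  generalize pdy (pdy (pdx u)) p = sy at *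
  generalize pdy (pdx (pdx u)) p = sx at *
  generalize pdx (pdx u) p = r at *
  generalize pdy (pdx u) p = s at *
  generalize pdy (pdy u) p = t at *
  generalize pdx u p = a at *
  generalize pdy u p = b at *
  generalize u p = c at *
  generalize hx : p.1 = x at *
  generalize hy : p.2 = y at *
  have hα : α = (r * t - s ^ 2) / (x * a + y * b - c) ^ 4 := by
    rw [eq_div_iff (pow_ne_zero 4 hW)]; exact hS.symm
  clear hS
  subst hα
  field_simp
  ring
end
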